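/- arXiv:1412.3701 — 6 statements merged into one kernel-verified Lean document; each statement's English description precedes it below -/
import Mathlib

section
/- Delay games are monotone in the delay function: if f and f' are delay functions with f(i) ≤ f'(i) for every i, and Player I wins the delay game Γ_{f'}(L), then Player I also wins Γ_f(L). -/
/-!
Player I wins `Γ_f(L)` by buffering a winning strategy `τ` for the faster game `Γ_{f'}(L)`.
After the history `v 0 ⋯ v (n - 1)`, simulating `τ` yields `f' 0 + ⋯ + f' n` letters, at least
the `f 0 + ⋯ + f n` letters that have to be played by then; so `bufferStrategy` can always play
the next `f n` letters of the simulated word. The word played is at each stage a truncation of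
the simulated one (`blockCat_eq_take`), and as every `f n` is positive both words have the same
limit (`isCat_of_buffer`). Hence each play consistent with the buffered strategy has the same
outcome as the play of `Γ_{f'}(L)` in which `τ` faces the same answers of Player O.
-/

namespace DelayGames

/-- A delay function: positive in every round. -/
def IsDelay (f : ℕ → ℕ) : Prop := ∀ i, 1 ≤ f i

/-- A constant delay function: `f i = 1` for all `i > 0`. -/
def IsConstant (f : ℕ → ℕ) : Prop := ∀ i, 0 < i → f i = 1

section Games

variable {I O : Type*}

/-- `α` is the ω-word obtained by concatenating the blocks `u 0, u 1, u 2, …`: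
every finite concatenation of initial blocks is a prefix of `α`. -/
def IsCat (u : ℕ → List I) (α : ℕ → I) : Prop :=
  ∀ i, ((List.range i).map u).flatten =
    (List.range (((List.range i).map u).flatten.length)).map α

/-- The blocks of Player I have the lengths prescribed by the delay function. -/
def ValidBlocks (f : ℕ → ℕ) (u : ℕ → List I) : Prop := ∀ i, (u i).length = f i

/-- The play `(u, v)` is consistent with the strategy `τ` of Player O:
in every round, `v i` is prescribed by `τ` applied to `u 0 ⋯ u i`. -/
def ConsistentO (τ : List I → O) (u : ℕ → List I) (v : ℕ → O) : Prop :=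
  ∀ i, v i = τ (((List.range (i + 1)).map u).flatten)

/-- The play `(u, v)` is consistent with the strategy `τ` of Player I:
in every round, `u i` is prescribed by `τ` applied to `v 0 ⋯ v (i-1)`. -/
def ConsistentI (τ : List O → List I) (u : ℕ → List I) (v : ℕ → O) : Prop :=
  ∀ i, u i = τ ((List.range i).map v)

/-- Player O wins the delay game `Γ_f(L)`: she has a strategy such that every
consistent play (against blocks of the prescribed lengths) has its outcome in `L`. -/
def WinsO (f : ℕ → ℕ) (L : Set (ℕ → I × O)) : Prop :=
  ∃ τ : List I → O, ∀ u v α, ValidBlocks f u → ConsistentO τ u v → IsCat u α →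
    (fun n => (α n, v n)) ∈ L

/-- Player I wins the delay game `Γ_f(L)`: he has a strategy respecting the
lengths prescribed by `f` such that no consistent play has its outcome in `L`. -/
def WinsI (f : ℕ → ℕ) (L : Set (ℕ → I × O)) : Prop :=
  ∃ τ : List O → List I, (∀ w, (τ w).length = f w.length) ∧
    ∀ u v α, ConsistentI τ u v → IsCat u α → (fun n => (α n, v n)) ∉ L

/-- Projection of a winning condition to the first components. -/
def projL (L : Set (ℕ → I × O)) : Set (ℕ → I) :=
  {α | ∃ β : ℕ → O, (fun n => (α n, β n)) ∈ L}

end Games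

/-- The prefix of length `k` of an ω-word. -/
def pre {A : Type*} (x : ℕ → A) (k : ℕ) : List A := (List.range k).map x

/-- `K · A^ω`: the ω-words having a finite prefix in `K`. -/
def extOmega {A : Type*} (K : Set (List A)) : Set (ℕ → A) := {x | ∃ k, pre x k ∈ K}

/-- Nondeterministic automata with a complete transition function. -/
structure NA (Q A : Type*) where
  init : Q
  trans : Q → A → Set Q
  accept : Set Q
  complete : ∀ q a, (trans q a).Nonempty

namespace NA

variable {Q A : Type*} (M : NA Q A)

/-- The automaton is deterministic. -/
def Deterministic : Prop := ∀ q a, ∃ q', M.trans q a = {q'}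

/-- The states reachable from a set of states after reading a finite word. -/
def reach (S : Set Q) (w : List A) : Set Q :=
  w.foldl (fun T a => ⋃ q ∈ T, M.trans q a) S

/-- The finite words accepted by `M` (runs from the initial state ending in `accept`). -/
def Lstar : Set (List A) := {w | (M.reach {M.init} w ∩ M.accept).Nonempty}

/-- `ρ` is a run of `M` on the ω-word `x`. -/
def IsRun (x : ℕ → A) (ρ : ℕ → Q) : Prop :=
  ρ 0 = M.init ∧ ∀ n, ρ (n + 1) ∈ M.trans (ρ n) (x n)

/-- Reachability acceptance: some run visits an accepting state at least once. -/
def Lexists : Set (ℕ → A) := {x | ∃ ρ, M.IsRun x ρ ∧ ∃ n, ρ n ∈ M.accept}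

/-- Safety acceptance: some run visits only accepting states. -/
def Lforall : Set (ℕ → A) := {x | ∃ ρ, M.IsRun x ρ ∧ ∀ n, ρ n ∈ M.accept}

/-- A state is productive if an accepting state is reachable from it. -/
def Productive (q : Q) : Prop := ∃ w, (M.reach {q} w ∩ M.accept).Nonempty

/-- A state lies on a cycle. -/
def OnCycle (q : Q) : Prop := ∃ w : List A, w ≠ [] ∧ q ∈ M.reach {q} w

/-- An automaton is acyclic if every state on a cycle is non-productive. -/
def Acyclic : Prop := ∀ q, M.OnCycle q → ¬ M.Productive q

/-- A state is reachable from the initial state. -/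
def ReachableState (q : Q) : Prop := ∃ w, q ∈ M.reach {M.init} w

/-- `k` is the depth of the (acyclic) automaton `M`: the length of a longest
path from the initial state to an accepting state. -/
def HasDepth (k : ℕ) : Prop :=
  (∀ w ∈ M.Lstar, w.length ≤ k) ∧ ∃ w ∈ M.Lstar, w.length = k

end NA

/-- Projection of an automaton over `I × O` to the alphabet `I`. -/
def NA.projI {Q I O : Type*} [Nonempty O] (M : NA Q (I × O)) : NA Q I where
  init := M.init
  trans q a := ⋃ b : O, M.trans q (a, b)
  accept := M.accept
  complete q a := by
    obtain ⟨b⟩ := ‹Nonempty O›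
    obtain ⟨q', hq'⟩ := M.complete q (a, b)
    exact ⟨q', Set.mem_iUnion.2 ⟨b, hq'⟩⟩

/-- Deterministic parity automata. -/
structure DPA (Q A : Type*) where
  init : Q
  trans : Q → A → Q
  color : Q → ℕ

/-- The maximal value occurring infinitely often in the sequence `c` exists
and is even. -/
def MaxEvenInf (c : ℕ → ℕ) : Prop :=
  ∃ k, Even k ∧ {n | c n = k}.Infinite ∧ ∀ k', {n | c n = k'}.Infinite → k' ≤ k

/-- Deterministic finite automata (acceptors for finite words). -/
structure DFAcc (S A : Type*) where
  init : S
  trans : S → A → S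
  accept : Set S

/-- The language of finite words accepted by a DFA. -/
def DFAcc.lang {S A : Type*} (D : DFAcc S A) : Set (List A) :=
  {w | w.foldl D.trans D.init ∈ D.accept}

namespace DPA

variable {Q A : Type*} (M : DPA Q A)

/-- The unique run of a deterministic automaton on an ω-word. -/
def run (x : ℕ → A) : ℕ → Q
  | 0 => M.init
  | n + 1 => M.trans (run x n) (x n)

/-- The parity language of `M`: the maximal color visited infinitely often is even. -/
def Lparity : Set (ℕ → A) := {x | MaxEvenInf fun n => M.color (M.run x n)}

/-- The number of colors of `M`. -/
def numColors [Fintype Q] : ℕ := (Finset.image M.color Finset.univ).card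

end DPA

namespace DPA

variable {Q I O : Type*} (M : DPA Q (I × O))

/-- The transition function of the color-tracking automaton `𝒞`. -/
def transC (qc : Q × ℕ) (x : I × O) : Q × ℕ :=
  (M.trans qc.1 x, max qc.2 (M.color (M.trans qc.1 x)))

/-- The initial state of the color-tracking automaton `𝒞`. -/
def initC : Q × ℕ := (M.init, M.color M.init)

/-- The valid states of `𝒞`, i.e. `Q × Ω(Q)`. -/
def QCvalid : Set (Q × ℕ) := {qc | qc.2 ∈ Set.range M.color}

/-- One step of the powerset automaton of the projection of `𝒞`. -/
def transP (S : Set (Q × ℕ)) (a : I) : Set (Q × ℕ) :=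
  ⋃ s ∈ S, ⋃ b : O, {M.transC s (a, b)}

/-- Iterated powerset transitions `δ_P^*`. -/
def transPStar (S : Set (Q × ℕ)) (w : List I) : Set (Q × ℕ) :=
  w.foldl M.transP S

/-- The domain of a partial function, represented via `Option`. -/
def rdom {Q : Type*} (r : (Q × ℕ) → Option (Set (Q × ℕ))) : Set (Q × ℕ) :=
  {qc | r qc ≠ none}

open scoped Classical in
/-- The partial function `r_w^D` with domain `D`. -/
noncomputable def rOf (D : Set (Q × ℕ)) (w : List I) :
    (Q × ℕ) → Option (Set (Q × ℕ)) :=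
  fun qc =>
    if qc ∈ D then some (M.transPStar ({(qc.1, M.color qc.1)} : Set (Q × ℕ)) w)
    else none

/-- The set `W_r` of witnesses of a partial function `r`. -/
def WitnessSet (r : (Q × ℕ) → Option (Set (Q × ℕ))) : Set (List I) :=
  {w | r = M.rOf (rdom r) w}

/-- The set `𝔉` of partial functions with nonempty domain and infinitely many
witnesses. -/
def Frak : Set ((Q × ℕ) → Option (Set (Q × ℕ))) :=
  {r | (rdom r).Nonempty ∧ (M.WitnessSet r).Infinite}

end DPA

end DelayGames

namespace DelayGames

section Monotonicity

variable {A : Type*}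

/-- The concatenation `u 0 ⋯ u (n - 1)` of the first `n` blocks. -/
def blockCat (u : ℕ → List A) (n : ℕ) : List A := ((List.range n).map u).flatten

lemma blockCat_succ (u : ℕ → List A) (n : ℕ) :
    blockCat u (n + 1) = blockCat u n ++ u n := by
  simp [blockCat, List.range_succ]

lemma length_blockCat {u : ℕ → List A} {f : ℕ → ℕ} {n : ℕ}
    (h : ∀ i < n, (u i).length = f i) :
    (blockCat u n).length = ∑ i ∈ Finset.range n, f i := by
  induction n with
  | zero => simp [blockCat]
  | succ n ih =>
    rw [blockCat_succ, List.length_append, Finset.sum_range_succ,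
      ih fun i hi => h i (by omega), h n (by omega)]

lemma blockCat_prefix (u : ℕ → List A) {m n : ℕ} (h : m ≤ n) :
    blockCat u m <+: blockCat u n := by
  induction n, h using Nat.le_induction with
  | base => exact List.prefix_rfl
  | succ n _ ih =>
    rw [blockCat_succ]
    exact ih.trans (List.prefix_append _ _)

lemma IsCat.getElem {u : ℕ → List A} {α : ℕ → A} (h : IsCat u α) (n k : ℕ)
    (hk : k < (blockCat u n).length) : (blockCat u n)[k] = α k := by
  have h1 : (blockCat u n)[k]? = ((List.range (blockCat u n).length).map α)[k]? :=
    congrArg (fun l => l[k]?) (h n)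
  rw [List.getElem?_eq_getElem hk] at h1
  simpa [hk] using h1

lemma isCat_of_getElem {u : ℕ → List A} {α : ℕ → A}
    (h : ∀ n k, ∀ hk : k < (blockCat u n).length, (blockCat u n)[k] = α k) : IsCat u α := by
  intro n
  change blockCat u n = (List.range (blockCat u n).length).map α
  refine List.ext_getElem (by simp) fun k h1 _ => ?_
  simp [h n k h1]

/-- If block `n` of `u` consists of the next `f n` letters among those revealed by
`u' 0 ⋯ u' n`, then `u 0 ⋯ u (n - 1)` is a truncation of `u' 0 ⋯ u' (n - 1)`. -/
lemma blockCat_eq_take {u u' : ℕ → List A} {f f' : ℕ → ℕ} (hle : ∀ i, f i ≤ f' i)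
    (hu' : ∀ i, (u' i).length = f' i)
    (hu : ∀ n, u n =
      ((blockCat u' (n + 1)).drop (∑ i ∈ Finset.range n, f i)).take (f n)) (n : ℕ) :
    blockCat u n = (blockCat u' n).take (∑ i ∈ Finset.range n, f i) := by
  induction n with
  | zero => simp [blockCat]
  | succ n ih =>
    have hlen : ∑ i ∈ Finset.range n, f i ≤ (blockCat u' n).length := by
      rw [length_blockCat fun i _ => hu' i]
      exact Finset.sum_le_sum fun i _ => hle i
    rw [blockCat_succ u, ih, hu n, Finset.sum_range_succ, List.take_add]
    congr 1
    rw [blockCat_succ, List.take_append_of_le_length hlen]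

/-- A buffered version of a block sequence has the same concatenation as the original:
the positivity of `f` ensures that every letter is eventually released. -/
lemma isCat_of_buffer {u u' : ℕ → List A} {f f' : ℕ → ℕ} {α : ℕ → A}
    (hf : IsDelay f) (hle : ∀ i, f i ≤ f' i) (hu' : ∀ i, (u' i).length = f' i)
    (hu : ∀ n, u n =
      ((blockCat u' (n + 1)).drop (∑ i ∈ Finset.range n, f i)).take (f n))
    (hα : IsCat u α) : IsCat u' α := by
  refine isCat_of_getElem fun n k hk => ?_
  -- After `m` rounds at least `m > k` letters of the buffer have been released.
  set m := max n (k + 1)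
  have hsum : k < ∑ i ∈ Finset.range m, f i := by
    have : ∑ _i ∈ Finset.range m, 1 ≤ ∑ i ∈ Finset.range m, f i :=
      Finset.sum_le_sum fun i _ => hf i
    simp only [Finset.sum_const, Finset.card_range, smul_eq_mul, mul_one] at this
    omega
  have hpre := blockCat_prefix u' (le_max_left n (k + 1))
  have hk' : k < (blockCat u' m).length := hk.trans_le hpre.length_le
  have htake := blockCat_eq_take hle hu' hu m
  have hkm : k < (blockCat u m).length := by
    rw [htake, List.length_take]
    exact lt_min hsum hk'
  rw [hpre.getElem hk, ← hα.getElem m k hkm]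
  simp only [htake, List.getElem_take]
  rfl

/-- The strategy for Player I that simulates `τ` on all prefixes of the history `w`, thus
obtaining a buffer of letters, and plays the next `f |w|` letters of this buffer. -/
def bufferStrategy {I O : Type*} (f : ℕ → ℕ) (τ : List O → List I) (w : List O) : List I :=
  ((blockCat (fun j => τ (w.take j)) (w.length + 1)).drop
    (∑ i ∈ Finset.range w.length, f i)).take (f w.length)

end Monotonicity

/-- Delay games are monotone in the delay function: if `f ≤ f'`
pointwise and Player I wins `Γ_{f'}(L)`, then Player I wins `Γ_f(L)`. -/
theorem stmt1 {I O : Type*} [Fintype I] [Fintype O] [Nonempty I] [Nonempty O]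
    (L : Set (ℕ → I × O)) (f f' : ℕ → ℕ) (hf : IsDelay f) (hf' : IsDelay f')
    (hle : ∀ i, f i ≤ f' i) (h : WinsI f' L) :
    WinsI f L := by
  obtain ⟨τ, hlen, hwin⟩ := h
  refine ⟨bufferStrategy f τ, fun w => ?_, fun u v α hu hα => ?_⟩
  · have h1 : (blockCat (fun j => τ (w.take j)) (w.length + 1)).length =
        ∑ i ∈ Finset.range (w.length + 1), f' i := by
      refine length_blockCat fun i hi => ?_
      rw [hlen, List.length_take, min_eq_left (by omega)]
    have h2 : ∑ i ∈ Finset.range (w.length + 1), f i ≤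
        ∑ i ∈ Finset.range (w.length + 1), f' i := Finset.sum_le_sum fun i _ => hle i
    rw [Finset.sum_range_succ] at h2
    rw [bufferStrategy, List.length_take, List.length_drop, h1]
    omega
  · -- The same answers `v` of Player O, played against `τ`, produce the same outcome.
    refine hwin (fun i => τ ((List.range i).map v)) v α (fun _ => rfl) ?_
    refine isCat_of_buffer hf hle (fun i => by simp [hlen]) (fun n => ?_) hα
    rw [hu n, bufferStrategy]
    simp only [List.length_map, List.length_range]
    congr 2
    unfold blockCat
    congr 1
    refine List.map_congr_left fun j hj => ?_
    have hj' : j ≤ n := by simpa [Nat.lt_succ_iff] using hj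
    simp [← List.map_take, List.take_range, hj']

end DelayGames
end

section
/- Let n ≥ 1 and let w be a finite word over the alphabet {1,…,n} that contains no bad j-pair for any j ∈ {1,…,n}. If w is nonempty and m is the maximal letter occurring in w, then |w| < 2^m; in particular, |w| < 2^n. -/
namespace DelayGames

/-- The finite word `w` over `{1, …, n} ⊆ ℕ` contains a bad `j`-pair: two
occurrences of `j` such that no letter `j' > j` occurs in between. -/
def HasBadPair (w : List ℕ) (j : ℕ) : Prop :=
  ∃ i₁ i₂, i₁ < i₂ ∧ i₂ < w.length ∧ w.getD i₁ 0 = j ∧ w.getD i₂ 0 = j ∧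
    ∀ i, i₁ < i → i < i₂ → w.getD i 0 ≤ j

/-- Working with stretches `[a, b)` of a fixed sequence, rather than with factors of a word, avoids
transporting the absence of bad pairs to sublists. -/
theorem sub_lt_two_pow_of_no_bad_pair (f : ℕ → ℕ) (k : ℕ) : ∀ a b : ℕ,
    (∀ i, a ≤ i → i < b → 1 ≤ f i ∧ f i ≤ k) →
    (∀ i₁ i₂, a ≤ i₁ → i₁ < i₂ → i₂ < b → f i₁ = f i₂ → ∃ i, i₁ < i ∧ i < i₂ ∧ f i₁ < f i) →
    b - a < 2 ^ k := by
  induction k with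
  | zero =>
    intro a b hf _
    by_contra h
    have := hf a le_rfl (by simp at h; omega)
    omega
  | succ k ih =>
    intro a b hf hp
    by_cases hex : ∃ c, a ≤ c ∧ c < b ∧ f c = k + 1
    · obtain ⟨c, hac, hcb, hc⟩ := hex
      have huniq : ∀ i, a ≤ i → i < b → i ≠ c → f i ≤ k := by
        intro i hai hib hic
        by_contra hik
        have hi : f i = k + 1 := by have := hf i hai hib; omega
        rcases Nat.lt_or_gt_of_ne hic with h | h
        · obtain ⟨l, hl₁, hl₂, hl⟩ := hp i c hai h hcb (by omega)
          have := hf l (by omega) (by omega)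
          omega
        · obtain ⟨l, hl₁, hl₂, hl⟩ := hp c i hac h hib (by omega)
          have := hf l (by omega) (by omega)
          omega
      have hleft := ih a c
        (fun i h₁ h₂ => ⟨(hf i h₁ (by omega)).1, huniq i h₁ (by omega) (by omega)⟩)
        (fun i₁ i₂ h₁ h₂ h₃ h => hp i₁ i₂ h₁ h₂ (by omega) h)
      have hright := ih (c + 1) b
        (fun i h₁ h₂ => ⟨(hf i (by omega) h₂).1, huniq i (by omega) h₂ (by omega)⟩)
        (fun i₁ i₂ h₁ h₂ h₃ h => hp i₁ i₂ (by omega) h₂ h₃ h)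
      rw [pow_succ]
      omega
    · have hlt := ih a b
        (fun i h₁ h₂ => ⟨(hf i h₁ h₂).1, by
          have := hf i h₁ h₂
          have hne : f i ≠ k + 1 := fun h => hex ⟨i, h₁, h₂, h⟩
          omega⟩) hp
      rw [pow_succ]
      omega

/-- if a nonempty word over `{1, …, n}` contains no bad `j`-pair
for any `j ∈ {1, …, n}` and `m` is its maximal letter, then `|w| < 2^m`, and
in particular `|w| < 2^n`. -/
theorem stmt2 (n : ℕ) (hn : 1 ≤ n) (w : List ℕ)
    (hw : ∀ x ∈ w, 1 ≤ x ∧ x ≤ n)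
    (hbad : ∀ j, 1 ≤ j → j ≤ n → ¬ HasBadPair w j)
    (hne : w ≠ []) (m : ℕ) (hm : m ∈ w) (hmax : ∀ x ∈ w, x ≤ m) :
    w.length < 2 ^ m ∧ w.length < 2 ^ n := by
  have hmem : ∀ i, i < w.length → w.getD i 0 ∈ w := by
    intro i hi
    rw [List.getD_eq_getElem _ _ hi]
    exact List.getElem_mem hi
  have key : w.length < 2 ^ m := by
    refine sub_lt_two_pow_of_no_bad_pair (fun i => w.getD i 0) m 0 w.length ?_ ?_
    · intro i _ hi
      exact ⟨(hw _ (hmem i hi)).1, hmax _ (hmem i hi)⟩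
    · intro i₁ i₂ _ h₁₂ h₂ heq
      by_contra! hno
      have hj := hw _ (hmem i₁ (h₁₂.trans h₂))
      exact hbad _ hj.1 hj.2 ⟨i₁, i₂, h₁₂, h₂, rfl, heq.symm, hno⟩
  exact ⟨key, key.trans_le (Nat.pow_le_pow_right (by norm_num) (hw m hm).2)⟩

end DelayGames
end

section
/- For every n > 1 let Σ_I = Σ_O = {1,…,n} and let L_n ⊆ (Σ_I × Σ_O)^ω be defined by: (α(0),β(0))(α(1),β(1))(α(2),β(2))⋯ ∈ L_n iff the word α(1)α(2)α(3)⋯ contains a bad β(0)-pair. Then (i) there is a constant c such that for every n > 1, L_n = L_∃(A_n) for a deterministic reachability automaton A_n with at most c·n states; (ii) Player O wins Γ_f(L_n) for every constant delay function f with f(0) > 2^n; and (iii) Player I wins Γ_f(L_n) for every delay function f with f(0) ≤ 2^n. -/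
namespace DelayGames

/-- The ω-word `α` over `{1, …, n}` (represented by `Fin n`) contains a bad
`j`-pair: two occurrences of `j` with no larger letter in between. -/
def HasBadPairOmega {n : ℕ} (α : ℕ → Fin n) (j : Fin n) : Prop :=
  ∃ i₁ i₂, i₁ < i₂ ∧ α i₁ = j ∧ α i₂ = j ∧ ∀ i, i₁ < i → i < i₂ → α i ≤ j

/-- The winning condition `L_n`: the word `α(1)α(2)α(3)⋯` contains a bad
`β(0)`-pair. -/
def Lbad (n : ℕ) : Set (ℕ → Fin n × Fin n) :=
  {x | HasBadPairOmega (fun k => (x (k + 1)).1) (x 0).2}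

/-! ### The automaton -/

/-- The transition map of the automaton for `Lbad n`. The states are: `none`, the initial state;
`some none`, the accepting sink; and `some (some (j, b))`, where `j` is the stored letter `β(0)` and
`b` says whether `j` has occurred in `α(1)α(2)⋯` with no larger letter since. -/
def badStep {n : ℕ} : Option (Option (Fin n × Bool)) → Fin n × Fin n → Option (Option (Fin n × Bool))
  | none, x => some (some (x.2, false))
  | some none, _ => some none
  | some (some (j, false)), x => if x.1 = j then some (some (j, true)) else some (some (j, false))
  | some (some (j, true)), x =>
      if x.1 = j then some none
      else if j < x.1 then some (some (j, false)) else some (some (j, true))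

/-- The deterministic reachability automaton with `2 * n + 2` states recognizing `Lbad n`. -/
def badAut (n : ℕ) : NA (Option (Option (Fin n × Bool))) (Fin n × Fin n) where
  init := none
  trans q x := {badStep q x}
  accept := {some none}
  complete _ _ := Set.singleton_nonempty _

/-- Soundness: the invariant relating the state reached after `k + 1` letters to the word read. -/
theorem badAut_sound {n : ℕ} {x : ℕ → Fin n × Fin n} {ρ : ℕ → Option (Option (Fin n × Bool))}
    (h0 : ρ 0 = none) (hs : ∀ k, ρ (k + 1) = badStep (ρ k) (x k)) (k : ℕ) :
    ρ (k + 1) = some (some ((x 0).2, false)) ∨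
    (ρ (k + 1) = some (some ((x 0).2, true)) ∧
      ∃ i < k, (x (i + 1)).1 = (x 0).2 ∧ ∀ l, i < l → l < k → (x (l + 1)).1 ≤ (x 0).2) ∨
    (ρ (k + 1) = some none ∧ x ∈ Lbad n) := by
  induction k with
  | zero => left; rw [hs, h0]; rfl
  | succ k ih =>
    rw [hs (k + 1)]
    rcases ih with h | ⟨h, i, hik, hi, hl⟩ | ⟨h, hx⟩
    · rw [h]
      by_cases hj : (x (k + 1)).1 = (x 0).2
      · right; left
        exact ⟨by simp [badStep, hj], k, by omega, hj, fun l h1 h2 => by omega⟩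
      · left; simp [badStep, hj]
    · rw [h]
      by_cases hj : (x (k + 1)).1 = (x 0).2
      · right; right
        exact ⟨by simp [badStep, hj], i, k, hik, hi, hj, hl⟩
      · by_cases hlt : (x 0).2 < (x (k + 1)).1
        · left; simp [badStep, hj, hlt]
        · right; left
          refine ⟨by simp [badStep, hj, hlt], i, by omega, hi, fun l h1 h2 => ?_⟩
          rcases Nat.lt_succ_iff_lt_or_eq.1 h2 with h3 | rfl
          · exact hl l h1 h3
          · exact not_lt.1 hlt
    · right; right; rw [h]; exact ⟨rfl, hx⟩

theorem badAut_Lexists (n : ℕ) : (badAut n).Lexists = Lbad n := by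
  ext x
  constructor
  · rintro ⟨ρ, ⟨h0, hs⟩, k, hk⟩
    have h0 : ρ 0 = none := h0
    have hs : ∀ k, ρ (k + 1) = badStep (ρ k) (x k) := hs
    have hk : ρ k = some none := hk
    cases k with
    | zero => simp [h0] at hk
    | succ k =>
      rcases badAut_sound h0 hs k with h | ⟨h, _⟩ | ⟨_, h⟩
      · simp [hk] at h
      · simp [hk] at h
      · exact h
  · rintro ⟨i, m, him, hi, hm, hl⟩
    dsimp only at hi hm hl
    obtain ⟨ρ, h0, hs⟩ : ∃ ρ : ℕ → Option (Option (Fin n × Bool)),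
        ρ 0 = none ∧ ∀ k, ρ (k + 1) = badStep (ρ k) (x k) :=
      ⟨fun k => Nat.rec none (fun k q => badStep q (x k)) k, rfl, fun _ => rfl⟩
    refine ⟨ρ, ⟨h0, hs⟩, ?_⟩
    by_contra hna
    have hna : ∀ k, ρ k ≠ some none := fun k hk => hna ⟨k, hk⟩
    -- From the first letter of the pair up to the second one, the bit stays set.
    have key : ∀ d, i + 1 + d ≤ m → ρ (i + 1 + d + 1) = some (some ((x 0).2, true)) := by
      intro d
      induction d with
      | zero =>
        intro _
        have h2 := hna (i + 1 + 1)
        rw [Nat.add_zero]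
        rw [hs (i + 1)] at h2 ⊢
        rcases badAut_sound h0 hs i with h | ⟨h, _⟩ | ⟨h, _⟩
        · rw [h]; simp [badStep, hi]
        · rw [h] at h2; simp [badStep, hi] at h2
        · exact absurd h (hna _)
      | succ d ih =>
        intro hd
        have h2 := hna (i + 1 + (d + 1) + 1)
        have h3 := ih (by omega)
        have h4 := hl (i + 1 + d) (by omega) (by omega)
        rw [hs, ← Nat.add_assoc, h3] at h2 ⊢
        by_cases hj : (x (i + 1 + d + 1)).1 = (x 0).2
        · simp [badStep, hj] at h2
        · simp [badStep, hj, not_lt.2 h4]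
    obtain ⟨d, rfl⟩ := Nat.exists_eq_add_of_le (show i + 1 ≤ m from him)
    have h2 := hna (i + 1 + d + 1 + 1)
    rw [hs, key d le_rfl] at h2
    simp [badStep, hm] at h2

/-! ### Bad pairs in long words -/

/-- Every word of length `2 ^ m` over an `m`-letter alphabet contains a bad pair. -/
theorem exists_bad_pair (m : ℕ) : ∀ (x : ℕ → ℕ) (a : ℕ), (∀ i, a ≤ i → i < a + 2 ^ m → x i < m) →
    ∃ i₁ i₂, a ≤ i₁ ∧ i₁ < i₂ ∧ i₂ < a + 2 ^ m ∧ x i₁ = x i₂ ∧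
      ∀ i, i₁ < i → i < i₂ → x i ≤ x i₁ := by
  induction m with
  | zero => intro x a h; exact absurd (h a le_rfl (by simp)) (by simp)
  | succ m ih =>
    intro x a h
    rw [pow_succ] at h ⊢
    by_cases hA : ∀ i, a ≤ i → i < a + 2 ^ m → x i < m
    · obtain ⟨i₁, i₂, h1, h2, h3, h4⟩ := ih x a hA
      exact ⟨i₁, i₂, h1, h2, by omega, h4⟩
    by_cases hB : ∀ i, a + 2 ^ m ≤ i → i < a + 2 ^ m + 2 ^ m → x i < m
    · obtain ⟨i₁, i₂, h1, h2, h3, h4⟩ := ih x (a + 2 ^ m) hB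
      exact ⟨i₁, i₂, by omega, h2, by omega, h4⟩
    push Not at hA hB
    obtain ⟨p, p1, p2, p3⟩ := hA
    obtain ⟨q, q1, q2, q3⟩ := hB
    have hp := h p p1 (by omega)
    have hq := h q (by omega) (by omega)
    refine ⟨p, q, p1, by omega, by omega, by omega, fun i h1 h2 => ?_⟩
    have := h i (by omega) (by omega)
    omega

theorem winsO_Lbad {n : ℕ} (hn : 1 < n) (f : ℕ → ℕ) (hf : 2 ^ n < f 0) : WinsO f (Lbad n) := by
  have : Nonempty (Fin n) := ⟨⟨0, by omega⟩⟩
  -- Pick a letter having a bad pair in the first block, position `0` being ignored.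
  refine ⟨fun w => Classical.epsilon fun j => ∃ i₁ i₂, 1 ≤ i₁ ∧ i₁ < i₂ ∧ w[i₁]? = some j ∧
    w[i₂]? = some j ∧ ∀ i, i₁ < i → i < i₂ → ∀ b, w[i]? = some b → b ≤ j, ?_⟩
  intro u v α hu hv hα
  have hv0 := hv 0
  have hα1 := hα 1
  have hu0 := hu 0
  simp only [zero_add, List.range_one, List.map_cons, List.map_nil, List.flatten_cons,
    List.flatten_nil, List.append_nil, hu0] at hv0 hα1
  rw [hα1] at hv0
  have hget : ∀ i, i < f 0 → ((List.range (f 0)).map α)[i]? = some (α i) := by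
    intro i hi
    simp [hi]
  obtain ⟨i₁, i₂, h1, h2, h3, h4, h5⟩ := exists_bad_pair n (fun i => (α i : ℕ)) 1
    (fun i _ _ => (α i).2)
  have hspec := Classical.epsilon_spec (p := fun j => ∃ i₁ i₂, 1 ≤ i₁ ∧ i₁ < i₂ ∧
    ((List.range (f 0)).map α)[i₁]? = some j ∧ ((List.range (f 0)).map α)[i₂]? = some j ∧
    ∀ i, i₁ < i → i < i₂ → ∀ b, ((List.range (f 0)).map α)[i]? = some b → b ≤ j)
    ⟨α i₁, i₁, i₂, h1, h2, hget _ (by omega),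
      by rw [hget _ (by omega)]; exact congrArg some (Fin.ext h4.symm),
      fun i a b c hc => by
        rw [hget _ (by omega), Option.some_inj] at hc
        subst hc
        exact h5 i a b⟩
  rw [← hv0] at hspec
  obtain ⟨k₁, k₂, g1, g2, g3, g4, g5⟩ := hspec
  have hk₂ : k₂ < f 0 := by
    by_contra hc
    rw [List.getElem?_eq_none (by simpa using hc)] at g4
    exact absurd g4 (by simp)
  rw [hget _ (by omega), Option.some_inj] at g3 g4
  refine ⟨k₁ - 1, k₂ - 1, by omega, ?_, ?_, fun i a b => ?_⟩
  · simpa [Nat.sub_add_cancel g1] using g3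
  · simpa [Nat.sub_add_cancel (show 1 ≤ k₂ by omega)] using g4
  · exact g5 (i + 1) (by omega) (by omega) _ (hget _ (by omega))

/-! ### The ruler word and the strategy of Player I -/

/-- Two positive numbers with the same 2-adic valuation are separated by a number with a larger
one. -/
theorem exists_padicValNat_gt {a b : ℕ} (ha : 0 < a) (hab : a < b)
    (h : padicValNat 2 a = padicValNat 2 b) :
    ∃ c, a < c ∧ c < b ∧ padicValNat 2 a < padicValNat 2 c := by
  set j := padicValNat 2 a with hj
  have dvd_iff : ∀ {k m : ℕ}, m ≠ 0 → (2 ^ k ∣ m ↔ k ≤ padicValNat 2 m) :=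
    fun hm => padicValNat_dvd_iff_le hm
  have hpos : 0 < 2 ^ j := by positivity
  obtain ⟨p, hp⟩ := (dvd_iff (k := j) ha.ne').2 hj.le
  obtain ⟨q, hq⟩ := (dvd_iff (k := j) (show b ≠ 0 by omega)).2 h.le
  have hp2 : ¬ 2 ∣ p := by
    intro hd
    have : 2 ^ (j + 1) ∣ a := by rw [hp, pow_succ]; exact Nat.mul_dvd_mul_left _ hd
    have := (dvd_iff ha.ne').1 this
    omega
  have hq2 : ¬ 2 ∣ q := by
    intro hd
    have : 2 ^ (j + 1) ∣ b := by rw [hq, pow_succ]; exact Nat.mul_dvd_mul_left _ hd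
    have := (dvd_iff (show b ≠ 0 by omega)).1 this
    omega
  have hpq : p < q := by
    rw [hp, hq] at hab
    exact lt_of_mul_lt_mul_left hab (Nat.zero_le _)
  refine ⟨2 ^ j * (p + 1), ?_, ?_, ?_⟩
  · rw [hp]; exact Nat.mul_lt_mul_of_pos_left (by omega) hpos
  · rw [hq]; exact Nat.mul_lt_mul_of_pos_left (by omega) hpos
  · have : 2 ^ (j + 1) ∣ 2 ^ j * (p + 1) := by
      rw [pow_succ]; exact Nat.mul_dvd_mul_left _ (by omega)
    exact (dvd_iff (by positivity)).1 this

/-- Letter `k` of the ruler word over `Fin n`: the 2-adic valuation of `k`. The cap at `n - 1` is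
inactive for `1 ≤ k < 2 ^ n`, and letter `0` is junk. -/
noncomputable def ruler {n : ℕ} (hn : 1 < n) (k : ℕ) : Fin n :=
  ⟨min (padicValNat 2 k) (n - 1), by omega⟩

theorem ruler_val {n : ℕ} (hn : 1 < n) {k : ℕ} (hk : 0 < k) (hkn : k < 2 ^ n) :
    (ruler hn k : ℕ) = padicValNat 2 k := by
  have h : 2 ^ padicValNat 2 k ≤ k := Nat.le_of_dvd hk pow_padicValNat_dvd
  have : padicValNat 2 k < n := (Nat.pow_lt_pow_iff_right (by norm_num)).1 (h.trans_lt hkn)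
  simp only [ruler]
  omega

/-- A letter different from `b`. -/
def otherLetter {n : ℕ} (hn : 1 < n) (b : Fin n) : Fin n :=
  if (b : ℕ) = 0 then ⟨1, hn⟩ else ⟨0, by omega⟩

theorem otherLetter_ne {n : ℕ} (hn : 1 < n) (b : Fin n) : otherLetter hn b ≠ b := by
  intro h
  have := congrArg Fin.val h
  unfold otherLetter at this
  split_ifs at this with h0
  · simp [h0] at this
  · exact h0 this.symm

/-- Player I's strategy: the ruler word first, then forever a letter different from `β(0)`. -/
noncomputable def stratI {n : ℕ} (hn : 1 < n) (f : ℕ → ℕ) : List (Fin n) → List (Fin n)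
  | [] => (List.range (f 0)).map (ruler hn)
  | b :: w => List.replicate (f (w.length + 1)) (otherLetter hn b)

theorem winsI_Lbad {n : ℕ} (hn : 1 < n) (f : ℕ → ℕ) (hf : IsDelay f) (hf0 : f 0 ≤ 2 ^ n) :
    WinsI f (Lbad n) := by
  refine ⟨stratI hn f, fun w => by cases w <;> simp [stratI], ?_⟩
  intro u v α hu hα hL
  have hu0 : u 0 = (List.range (f 0)).map (ruler hn) := hu 0
  have huS : ∀ i, u (i + 1) = List.replicate (f (i + 1)) (otherLetter hn (v 0)) := by
    intro i
    rw [hu (i + 1), List.range_succ_eq_map]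
    simp [stratI]
  have hfirst : ∀ p, p < f 0 → α p = ruler hn p := by
    intro p hp
    have h := hα 1
    simp only [List.range_one, List.map_cons, List.map_nil, List.flatten_cons,
      List.flatten_nil, List.append_nil, hu0, List.length_map, List.length_range] at h
    have := congrArg (fun l : List (Fin n) => l[p]?) h
    simpa [hp] using this.symm
  have hlater : ∀ p, f 0 ≤ p → α p ≠ v 0 := by
    intro p hp
    have hlen : ∀ m, m ≤ (((List.range m).map (fun i => u (i + 1))).flatten).length := by
      intro m
      induction m with
      | zero => simp
      | succ m ih =>
        have := hf (m + 1)
        rw [List.range_succ, List.map_append, List.flatten_append, List.length_append]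
        simp only [List.map_cons, List.map_nil, List.flatten_cons, List.flatten_nil,
          List.append_nil, huS m, List.length_replicate]
        omega
    have hmem : ∀ m, ∀ b ∈ ((List.range m).map (fun i => u (i + 1))).flatten,
        b = otherLetter hn (v 0) := by
      intro m b hb
      simp only [List.mem_flatten, List.mem_map, List.mem_range] at hb
      obtain ⟨l, ⟨i, _, rfl⟩, hb⟩ := hb
      rw [huS] at hb
      exact List.eq_of_mem_replicate hb
    -- `p + 1` blocks after the first one suffice to cover position `p`.
    have h := hα (p + 1 + 1)
    have hsplit : ((List.range (p + 1 + 1)).map u).flatten =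
        u 0 ++ ((List.range (p + 1)).map (fun i => u (i + 1))).flatten := by
      rw [List.range_succ_eq_map]
      simp [Function.comp_def]
    rw [hsplit] at h
    have hl := hlen (p + 1)
    have hm := hmem (p + 1)
    generalize ((List.range (p + 1)).map (fun i => u (i + 1))).flatten = W at h hl hm
    have hu0l : (u 0).length = f 0 := by simp [hu0]
    have h' := congrArg (fun l : List (Fin n) => l[p]?) h
    have hpl : p < (u 0 ++ W).length := by rw [List.length_append]; omega
    simp only [List.getElem?_map, List.getElem?_range hpl, Option.map_some] at h'
    rw [List.getElem?_append_right (by omega)] at h'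
    rw [hm _ (List.mem_of_getElem? h')]
    exact otherLetter_ne hn _
  obtain ⟨i, m, him, hi, hm, hl⟩ := hL
  dsimp only at hi hm hl
  have hmf : m + 1 < f 0 := by
    by_contra hc
    exact hlater _ (not_lt.1 hc) hm
  have val : ∀ k, k < f 0 → 0 < k → (α k : ℕ) = padicValNat 2 k := fun k h1 h2 => by
    rw [hfirst k h1, ruler_val hn h2 (by omega)]
  have hi' := val (i + 1) (by omega) (by omega)
  have hm' := val (m + 1) hmf (by omega)
  obtain ⟨c, c1, c2, c3⟩ := exists_padicValNat_gt (a := i + 1) (b := m + 1) (by omega) (by omega)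
    (by rw [← hi', ← hm', hi, hm])
  have hc := hl (c - 1) (by omega) (by omega)
  rw [Nat.sub_add_cancel (by omega), ← hi, Fin.le_def, val c (by omega) (by omega), hi'] at hc
  omega

/-- the languages `L_n` are recognized by deterministic
reachability automata of size `O(n)`, Player O wins `Γ_f(L_n)` for every
constant delay function with `f(0) > 2^n`, and Player I wins `Γ_f(L_n)` for
every delay function with `f(0) ≤ 2^n`. -/
theorem stmt4 :
    ∃ c : ℕ, ∀ n : ℕ, 1 < n →
      (∃ (Q : Type) (_ : Fintype Q) (M : NA Q (Fin n × Fin n)),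
          M.Deterministic ∧ Fintype.card Q ≤ c * n ∧ M.Lexists = Lbad n) ∧
      (∀ f : ℕ → ℕ, IsDelay f → IsConstant f → 2 ^ n < f 0 → WinsO f (Lbad n)) ∧
      (∀ f : ℕ → ℕ, IsDelay f → f 0 ≤ 2 ^ n → WinsI f (Lbad n)) := by
  -- The automaton has `2 * n + 2 ≤ 3 * n` states for `n ≥ 2`.
  refine ⟨3, fun n hn => ⟨⟨_, inferInstance, badAut n, fun q x => ⟨_, rfl⟩, ?_,
    badAut_Lexists n⟩, fun f _ _ hf => winsO_Lbad hn f hf, fun f hd hf => winsI_Lbad hn f hd hf⟩⟩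
  simp only [Fintype.card_option, Fintype.card_prod, Fintype.card_fin, Fintype.card_bool]
  omega

end DelayGames
end

section
/- Let L = L_∃(A) for a nondeterministic reachability automaton A over Σ_I × Σ_O. The following are equivalent: (1) Player O wins the delay game Γ_f(L) for some delay function f; (2) Player O wins Γ_f(L) for some constant delay function f with f(0) ≤ 2^{|A|}; (3) the projection pr_I(L) of L to the first components is universal, i.e., pr_I(L) = Σ_I^ω. -/
namespace DelayGames

/-- The subset construction of the projected automaton along `α`: the states reachable after
`n` letters of `α`, for some choice of the output letters. -/
def subsets {Q I O : Type*} (M : NA Q (I × O)) (α : ℕ → I) : ℕ → Set Q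
  | 0 => {M.init}
  | n + 1 => {q' | ∃ q ∈ subsets M α n, ∃ b, q' ∈ M.trans q (α n, b)}

lemma exists_run_of_mem_subsets {Q I O : Type*} [Nonempty O] (M : NA Q (I × O)) (α : ℕ → I)
    (n : ℕ) : ∀ q ∈ subsets M α n, ∃ (β : ℕ → O) (ρ : ℕ → Q), ρ 0 = M.init ∧
      (∀ k < n, ρ (k + 1) ∈ M.trans (ρ k) (α k, β k)) ∧ ρ n = q := by
  induction n with
  | zero =>
    intro q hq
    obtain ⟨b⟩ := ‹Nonempty O›
    exact ⟨fun _ => b, fun _ => M.init, rfl, fun k hk => absurd hk (by omega), hq.symm⟩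
  | succ n ih =>
    rintro q' ⟨q, hq, b, hb⟩
    obtain ⟨β, ρ, h0, hs, hn⟩ := ih q hq
    refine ⟨fun k => if k < n then β k else b, fun k => if k ≤ n then ρ k else q', ?_, ?_, ?_⟩
    · simp [h0]
    · intro k hk
      rcases Nat.lt_succ_iff_lt_or_eq.1 hk with h | h
      · have h1 : k + 1 ≤ n := h
        have h2 : k ≤ n := h.le
        simpa [h, h1, h2] using hs k h
      · subst h
        simpa [hn] using hb
    · simp

lemma mem_subsets_of_isRun {Q I O : Type*} (M : NA Q (I × O)) (α : ℕ → I) (β : ℕ → O)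
    (ρ : ℕ → Q) (h : M.IsRun (fun n => (α n, β n)) ρ) (n : ℕ) : ρ n ∈ subsets M α n := by
  induction n with
  | zero => exact h.1
  | succ n ih => exact ⟨ρ n, ih, β n, h.2 n⟩

/-- A finite run ending in an accepting state extends to an accepting run, by completeness. -/
lemma mem_Lexists_of_prefix {Q A : Type*} (M : NA Q A) (x : ℕ → A) (ρ : ℕ → Q) (n : ℕ)
    (h0 : ρ 0 = M.init) (hs : ∀ k < n, ρ (k + 1) ∈ M.trans (ρ k) (x k))
    (hn : ρ n ∈ M.accept) : x ∈ M.Lexists := by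
  choose g hg using M.complete
  -- Follow `ρ` for `n` steps, then an arbitrary choice of successors.
  let σ : ℕ → Q := fun k => Nat.rec M.init (fun k q => if k < n then ρ (k + 1) else g q (x k)) k
  have hσ : ∀ k, σ (k + 1) = if k < n then ρ (k + 1) else g (σ k) (x k) := fun k => rfl
  have heq : ∀ k ≤ n, σ k = ρ k := by
    intro k hk
    cases k with
    | zero => exact h0.symm
    | succ k => rw [hσ, if_pos (by omega)]
  refine ⟨σ, ⟨rfl, fun k => ?_⟩, n, by rwa [heq n le_rfl]⟩
  rw [hσ]
  split_ifs with h
  · rw [heq k h.le]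
    exact hs k h
  · exact hg _ _

/-- Pigeonhole on the subset construction: if the projection is universal, then along every word
an accepting state is reachable within the first `2^|Q|` letters. -/
lemma exists_accepting_subset {Q I O : Type*} [Fintype Q] (M : NA Q (I × O))
    (hU : projL M.Lexists = Set.univ) (α : ℕ → I) :
    ∃ n ≤ 2 ^ Fintype.card Q, ∃ q ∈ subsets M α n, q ∈ M.accept := by
  classical
  by_contra! hcon
  obtain ⟨i, j, hij, hj, heq⟩ : ∃ i j, i < j ∧ j ≤ 2 ^ Fintype.card Q ∧
      subsets M α i = subsets M α j := by
    obtain ⟨a, b, hab, h⟩ := Fintype.exists_ne_map_eq_of_card_lt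
      (fun k : Fin (2 ^ Fintype.card Q + 1) => subsets M α k) (by simp)
    rcases lt_or_gt_of_ne hab with hlt | hlt
    · exact ⟨a, b, hlt, by omega, h⟩
    · exact ⟨b, a, hlt, by omega, h.symm⟩
  -- `φ` runs through the positions `0, …, j - 1` and then loops through `i, …, j - 1` forever.
  let φ : ℕ → ℕ := fun n => Nat.rec 0 (fun _ p => if p + 1 = j then i else p + 1) n
  have hφ : ∀ n, φ (n + 1) = if φ n + 1 = j then i else φ n + 1 := fun n => rfl
  have hφlt : ∀ n, φ n < j := by
    intro n
    induction n with
    | zero => exact lt_of_le_of_lt (Nat.zero_le i) hij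
    | succ n ih =>
      rw [hφ]
      split_ifs <;> omega
  have hsub : ∀ n, subsets M (fun n => α (φ n)) n = subsets M α (φ n) := by
    intro n
    induction n with
    | zero => rfl
    | succ n ih =>
      have h1 : subsets M (fun n => α (φ n)) (n + 1) = subsets M α (φ n + 1) := by
        simp only [subsets, ih]
      rw [h1, hφ]
      split_ifs with h
      · rw [h, heq]
      · rfl
  have hmem : (fun n => α (φ n)) ∈ projL M.Lexists := hU ▸ Set.mem_univ _
  obtain ⟨β, ρ, hρ, n, hn⟩ := hmem
  have h2 := mem_subsets_of_isRun M (fun n => α (φ n)) β ρ hρ n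
  rw [hsub] at h2
  exact hcon (φ n) ((hφlt n).le.trans hj) _ h2 hn

lemma length_flatten_blocks {I : Type*} {f : ℕ → ℕ} {u : ℕ → List I} (hu : ValidBlocks f u)
    (i : ℕ) : ((List.range i).map u).flatten.length = ∑ k ∈ Finset.range i, f k := by
  induction i with
  | zero => simp
  | succ i ih =>
    rw [List.range_succ, List.map_append, List.flatten_append, List.length_append, ih,
      Finset.sum_range_succ]
    simp [hu i]

/-- Every ω-word can be cut into blocks of prescribed lengths. -/
lemma exists_blocks {I : Type*} (f : ℕ → ℕ) (α : ℕ → I) :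
    ∃ u, ValidBlocks f u ∧ IsCat u α := by
  let u : ℕ → List I := fun i =>
    (List.range (f i)).map fun k => α ((∑ m ∈ Finset.range i, f m) + k)
  have hu : ValidBlocks f u := fun i => by simp [u]
  refine ⟨u, hu, fun i => ?_⟩
  rw [length_flatten_blocks hu]
  induction i with
  | zero => simp
  | succ i ih =>
    rw [List.range_succ, List.map_append, List.flatten_append, ih, Finset.sum_range_succ,
      List.range_add, List.map_append]
    simp [u, Function.comp_def]

lemma projL_eq_univ_of_winsO {I O : Type*} {f : ℕ → ℕ} {L : Set (ℕ → I × O)}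
    (h : WinsO f L) : projL L = Set.univ := by
  obtain ⟨τ, hτ⟩ := h
  refine Set.eq_univ_of_forall fun α => ?_
  obtain ⟨u, hu, hc⟩ := exists_blocks f α
  exact ⟨_, hτ u _ α hu (fun _ => rfl) hc⟩

lemma winsO_of_projL_eq_univ {Q I O : Type*} [Fintype Q] [Nonempty I] [Nonempty O]
    (M : NA Q (I × O)) (hU : projL M.Lexists = Set.univ) :
    WinsO (fun i => if i = 0 then 2 ^ Fintype.card Q else 1) M.Lexists := by
  have hex : ∀ p : List I, ∃ β : ℕ → O, ∀ α : ℕ → I,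
      p = (List.range (2 ^ Fintype.card Q)).map α → (fun n => (α n, β n)) ∈ M.Lexists := by
    intro p
    -- Pad `p` to an ω-word; the run found only depends on the first `2^|Q|` letters.
    let a : I := Classical.arbitrary I
    obtain ⟨n, hn, q, hq, hqF⟩ := exists_accepting_subset M hU (fun k => p.getD k a)
    obtain ⟨β, ρ, h0, hs, rfl⟩ := exists_run_of_mem_subsets M _ n q hq
    refine ⟨β, fun α hα => mem_Lexists_of_prefix M _ ρ n h0 (fun k hk => ?_) hqF⟩
    have h1 := hs k hk
    have h2 : p.getD k a = α k := by
      rw [hα]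
      simp [List.getD, List.getElem?_range (lt_of_lt_of_le hk hn)]
    simpa only [h2] using h1
  choose B hB using hex
  refine ⟨fun w => B (w.take (2 ^ Fintype.card Q)) (w.length - 2 ^ Fintype.card Q),
    fun u v α hu hv hc => ?_⟩
  have hlen : ∀ i, ((List.range (i + 1)).map u).flatten.length = 2 ^ Fintype.card Q + i := by
    intro i
    rw [length_flatten_blocks hu, Finset.sum_range_succ']
    simp [add_comm]
  have hv' : v = B ((List.range (2 ^ Fintype.card Q)).map α) := by
    funext i
    have h := hc (i + 1)
    rw [hlen i] at h
    rw [hv i]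
    dsimp only
    rw [hlen i, h, ← List.map_take, List.take_range]
    simp
  rw [hv']
  exact hB _ α rfl

/-- for a nondeterministic reachability automaton `A` over
`Σ_I × Σ_O` and `L = L_∃(A)`, the following are equivalent: (1) Player O wins
`Γ_f(L)` for some delay function `f`; (2) Player O wins `Γ_f(L)` for some
constant delay function `f` with `f(0) ≤ 2^{|A|}`; (3) `pr_I(L)` is universal. -/
theorem stmt6 {Q I O : Type*} [Fintype Q] [Fintype I] [Fintype O]
    [Nonempty I] [Nonempty O] (M : NA Q (I × O)) :
    ((∃ f, IsDelay f ∧ WinsO f M.Lexists) ↔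
      (∃ f, IsDelay f ∧ IsConstant f ∧ f 0 ≤ 2 ^ Fintype.card Q ∧
        WinsO f M.Lexists)) ∧
    ((∃ f, IsDelay f ∧ WinsO f M.Lexists) ↔ projL M.Lexists = Set.univ) := by
  have h13 : (∃ f, IsDelay f ∧ WinsO f M.Lexists) → projL M.Lexists = Set.univ :=
    fun ⟨_, _, h⟩ => projL_eq_univ_of_winsO h
  have h32 : projL M.Lexists = Set.univ → ∃ f, IsDelay f ∧ IsConstant f ∧
      f 0 ≤ 2 ^ Fintype.card Q ∧ WinsO f M.Lexists := by
    intro hU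
    refine ⟨_, fun i => ?_, fun i hi => ?_, ?_, winsO_of_projL_eq_univ M hU⟩
    · split_ifs
      · exact Nat.one_le_two_pow
      · exact le_rfl
    · exact if_neg hi.ne'
    · exact (if_pos rfl).le
  have h21 : (∃ f, IsDelay f ∧ IsConstant f ∧ f 0 ≤ 2 ^ Fintype.card Q ∧
      WinsO f M.Lexists) → ∃ f, IsDelay f ∧ WinsO f M.Lexists :=
    fun ⟨f, hf, _, _, h⟩ => ⟨f, hf, h⟩
  exact ⟨⟨fun h => h32 (h13 h), h21⟩, h13, fun h => h21 (h32 h)⟩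

end DelayGames
end

section
/- Let K ⊆ Σ^* be recognized by a nondeterministic finite automaton with m states over a nonempty finite alphabet Σ, and suppose K is suffix-closed (w ∈ K implies ww' ∈ K for every w' ∈ Σ^*). If every ω-word over Σ has a finite prefix in K, then every word w ∈ Σ^* with |w| ≥ 2^m belongs to K. -/
namespace DelayGames

/-- The position, in a word read as the lasso `w[0..i) (w[i..j))^ω`, of the `n`-th letter:
positions increase by one, except that reaching `j` means going back to `i`. -/
def lassoPos (i j : ℕ) : ℕ → ℕ
  | 0 => 0
  | n + 1 => if lassoPos i j n + 1 = j then i else lassoPos i j n + 1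

theorem lassoPos_lt {i j : ℕ} (hij : i < j) (n : ℕ) : lassoPos i j n < j := by
  induction n with
  | zero => simp only [lassoPos]; omega
  | succ n ih => simp only [lassoPos]; split_ifs <;> omega

theorem NA.reach_append {Q A : Type*} (M : NA Q A) (S : Set Q) (u v : List A) :
    M.reach S (u ++ v) = M.reach (M.reach S u) v := by
  simp [NA.reach]

/-- If the prefixes of `w` of lengths `i < j` lead to the same set of states, then along the lasso
`w[0..i) (w[i..j))^ω` every reached set of states is already reached by a prefix of `w`. -/
theorem NA.reach_lasso {Q A : Type*} (M : NA Q A) (S : Set Q) (w : List A) {i j : ℕ}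
    (hij : i < j) (hj : j ≤ w.length) (h : M.reach S (w.take i) = M.reach S (w.take j)) (n : ℕ) :
    M.reach S (pre (fun n => w[lassoPos i j n]'((lassoPos_lt hij n).trans_le hj)) n) =
      M.reach S (w.take (lassoPos i j n)) := by
  induction n with
  | zero => simp [pre, lassoPos]
  | succ n ih =>
    have hlt := (lassoPos_lt hij n).trans_le hj
    have hstep : M.reach S (w.take (lassoPos i j (n + 1))) =
        M.reach S (w.take (lassoPos i j n + 1)) := by
      simp only [lassoPos]
      split_ifs with hw
      · rw [hw, h]
      · rfl
    rw [hstep, List.take_succ_eq_append_getElem hlt, M.reach_append, ← ih, ← M.reach_append]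
    simp [pre, List.range_succ]

/-- if `K` is recognized by an NFA with `m` states, is
suffix-closed, and every ω-word has a finite prefix in `K`, then every finite
word of length at least `2^m` belongs to `K`. -/
theorem stmt7 {Q A : Type*} [Fintype Q] [Fintype A] [Nonempty A] (M : NA Q A)
    (K : Set (List A)) (hK : K = M.Lstar)
    (hsuffix : ∀ w ∈ K, ∀ w' : List A, w ++ w' ∈ K)
    (huniv : ∀ α : ℕ → A, ∃ k, pre α k ∈ K) :
    ∀ w : List A, 2 ^ Fintype.card Q ≤ w.length → w ∈ K := by
  intro w hw
  by_contra hwK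
  -- By suffix-closedness, no prefix of `w` is in `K` either.
  have hpre : ∀ l, w.take l ∉ K := fun l hl =>
    hwK (by simpa using hsuffix _ hl (w.drop l))
  obtain ⟨i, j, hij, hj, h⟩ : ∃ i j, i < j ∧ j ≤ w.length ∧
      M.reach {M.init} (w.take i) = M.reach {M.init} (w.take j) := by
    -- The `w.length + 1` prefixes of `w` outnumber the `2 ^ m` sets of states.
    have hcard : Fintype.card (Set Q) < Fintype.card (Fin (w.length + 1)) := by
      rw [Fintype.card_set, Fintype.card_fin]; omega
    obtain ⟨a, b, hab, h⟩ := Fintype.exists_ne_map_eq_of_card_lt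
      (fun a : Fin (w.length + 1) => M.reach {M.init} (w.take a)) hcard
    rcases lt_or_gt_of_ne hab with hlt | hlt
    · exact ⟨a, b, hlt, by omega, h⟩
    · exact ⟨b, a, hlt, by omega, h.symm⟩
  obtain ⟨k, hk⟩ := huniv fun n => w[lassoPos i j n]'((lassoPos_lt hij n).trans_le hj)
  refine hpre (lassoPos i j k) ?_
  subst hK
  change (M.reach {M.init} _ ∩ M.accept).Nonempty at hk
  rwa [M.reach_lasso _ w hij hj h k] at hk

end DelayGames
end

section
/- With the color-tracking construction for a deterministic parity automaton A, let n = |Q_𝒞|: for every nonempty D ⊆ Q_𝒞 and every w ∈ Σ_I^* with |w| ≥ 2^{n²}, there exists r ∈ 𝔉 with dom(r) = D and w ∈ W_r. -/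
namespace DelayGames

namespace DPA

variable {Q I O : Type*} (M : DPA Q (I × O))

lemma transPStar_append (S : Set (Q × ℕ)) (u v : List I) :
    M.transPStar S (u ++ v) = M.transPStar (M.transPStar S u) v := by
  simp [transPStar, List.foldl_append]

lemma transPStar_subset_valid (u : List I) (S : Set (Q × ℕ)) (hS : S ⊆ M.QCvalid) :
    M.transPStar S u ⊆ M.QCvalid := by
  induction u generalizing S with
  | nil => exact hS
  | cons a u ih =>
    refine ih (M.transP S a) ?_
    intro p hp
    simp only [transP, Set.mem_iUnion, Set.mem_singleton_iff] at hp
    obtain ⟨s, hs, b, rfl⟩ := hp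
    rcases max_choice s.2 (M.color (M.trans s.1 (a, b))) with h | h
    · change max s.2 (M.color (M.trans s.1 (a, b))) ∈ Set.range M.color
      rw [h]
      exact hS hs
    · exact ⟨M.trans s.1 (a, b), h.symm⟩

/-- If reading `y` after `x` does not change the reached set, then neither does reading `y` any
number of times, whatever the continuation `z`. -/
lemma transPStar_pump (S : Set (Q × ℕ)) (x y z : List I)
    (h : M.transPStar S (x ++ y) = M.transPStar S x) (k : ℕ) :
    M.transPStar S (x ++ (List.replicate k y).flatten ++ z) = M.transPStar S (x ++ z) := by
  have hk : M.transPStar S (x ++ (List.replicate k y).flatten) = M.transPStar S x := by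
    induction k with
    | zero => simp
    | succ k ih =>
      rw [List.replicate_succ, List.flatten_cons, ← List.append_assoc, transPStar_append, h,
        ← transPStar_append, ih]
  rw [transPStar_append, hk, ← transPStar_append]

/-- The states of `𝒞` reached from `(q, Ω(q))` by reading `u`, for every `q`, as subsets of the
finite type `Q × Ω(Q)`. -/
def behaviour [Fintype Q] (u : List I) :
    Q → Set (Q × {c // c ∈ Finset.image M.color Finset.univ}) :=
  fun q => {p | (p.1, p.2.1) ∈ M.transPStar {(q, M.color q)} u}

/-- No information is lost in `behaviour`, because only states in `Q × Ω(Q)` are reached. -/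
lemma transPStar_eq_of_behaviour_eq [Fintype Q] {u v : List I}
    (h : M.behaviour u = M.behaviour v) (q : Q) :
    M.transPStar {(q, M.color q)} u = M.transPStar {(q, M.color q)} v := by
  have hS : ({(q, M.color q)} : Set (Q × ℕ)) ⊆ M.QCvalid := by
    rintro _ rfl
    exact ⟨q, rfl⟩
  have key : ∀ p ∈ M.QCvalid, p ∈ M.transPStar {(q, M.color q)} u ↔
      p ∈ M.transPStar {(q, M.color q)} v := by
    rintro ⟨s, c⟩ ⟨t, ht⟩
    have hc : c ∈ Finset.image M.color Finset.univ :=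
      Finset.mem_image.2 ⟨t, Finset.mem_univ t, ht⟩
    exact Set.ext_iff.1 (congrFun h q) (s, ⟨c, hc⟩)
  ext p
  exact ⟨fun hp => (key p (M.transPStar_subset_valid u _ hS hp)).1 hp,
    fun hp => (key p (M.transPStar_subset_valid v _ hS hp)).2 hp⟩

/-- The pigeonhole step: two distinct prefixes of a long word have the same behaviour. -/
lemma exists_pump_decomposition [Fintype Q] [Nonempty Q] (w : List I)
    (hw : 2 ^ ((Fintype.card Q * M.numColors) ^ 2) ≤ w.length) :
    ∃ x y z : List I, w = x ++ y ++ z ∧ y ≠ [] ∧ M.behaviour (x ++ y) = M.behaviour x := by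
  classical
  have hcard : Fintype.card (Q → Set (Q × {c // c ∈ Finset.image M.color Finset.univ})) ≤
      2 ^ ((Fintype.card Q * M.numColors) ^ 2) := by
    rw [Fintype.card_fun, Fintype.card_set, Fintype.card_prod, Fintype.card_coe, ← pow_mul]
    refine Nat.pow_le_pow_right (by norm_num) ?_
    change Fintype.card Q * M.numColors * Fintype.card Q ≤ _
    rw [sq]
    refine Nat.mul_le_mul_left _ (Nat.le_mul_of_pos_right _ ?_)
    exact Finset.card_pos.2 (Finset.univ_nonempty.image _)
  -- There are `w.length + 1` prefixes, hence more prefixes than behaviours.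
  obtain ⟨i, j, hij, hb⟩ := Fintype.exists_ne_map_eq_of_card_lt
    (fun i : Fin (w.length + 1) => M.behaviour (w.take i)) (by simp only [Fintype.card_fin]; omega)
  wlog hlt : i < j generalizing i j
  · exact this j i hij.symm hb.symm (lt_of_le_of_ne (not_lt.1 hlt) hij.symm)
  have hlt' : (i : ℕ) < j := hlt
  have hj : (j : ℕ) ≤ w.length := Nat.lt_succ_iff.1 j.2
  have hxy : w.take i ++ (w.take j).drop i = w.take j := by
    have h := List.take_append_drop i (w.take j)
    rwa [List.take_take, min_eq_left hlt'.le] at h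
  refine ⟨w.take i, (w.take j).drop i, w.drop j, ?_, ?_, ?_⟩
  · rw [hxy, List.take_append_drop]
  · intro h
    have := congrArg List.length h
    simp only [List.length_drop, List.length_take, List.length_nil] at this
    omega
  · rw [hxy]
    exact hb.symm

lemma rdom_rOf (D : Set (Q × ℕ)) (w : List I) : rdom (M.rOf D w) = D := by
  ext p
  simp [rdom, rOf]

end DPA

/-- with `n = |Q_𝒞|`, for every nonempty `D ⊆ Q_𝒞` and every
`w ∈ Σ_I^*` with `|w| ≥ 2^{n²}`, there exists `r ∈ 𝔉` with `dom(r) = D` and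
`w ∈ W_r`. -/
theorem stmt11 {Q I O : Type*} [Fintype Q] [Fintype I] [Fintype O]
    [Nonempty I] [Nonempty O] (M : DPA Q (I × O))
    (D : Set (Q × ℕ)) (hD : D.Nonempty) (hDvalid : D ⊆ M.QCvalid)
    (w : List I) (hw : 2 ^ ((Fintype.card Q * M.numColors) ^ 2) ≤ w.length) :
    ∃ r ∈ M.Frak, DPA.rdom r = D ∧ w ∈ M.WitnessSet r := by
  obtain ⟨d, hd⟩ := hD
  have : Nonempty Q := ⟨d.1⟩
  obtain ⟨x, y, z, rfl, hy, hb⟩ := M.exists_pump_decomposition w hw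
  refine ⟨M.rOf D (x ++ y ++ z), ⟨?_, ?_⟩, M.rdom_rOf D _, ?_⟩
  · rw [M.rdom_rOf]
    exact ⟨d, hd⟩
  · refine Set.infinite_of_injective_forall_mem
      (f := fun k : ℕ => x ++ (List.replicate k y).flatten ++ z) ?_ ?_
    · intro k l hkl
      have h := congrArg List.length hkl
      have hpos := List.length_pos_iff.2 hy
      simp only [List.length_append, List.length_flatten, List.map_replicate,
        List.sum_replicate, smul_eq_mul] at h
      exact Nat.eq_of_mul_eq_mul_right hpos (by omega)
    · intro k
      change M.rOf D (x ++ y ++ z) = M.rOf (DPA.rdom (M.rOf D (x ++ y ++ z))) _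
      rw [M.rdom_rOf]
      funext p
      have h := M.transPStar_eq_of_behaviour_eq hb p.1
      simp only [DPA.rOf]
      rw [M.transPStar_pump _ x y z h k, M.transPStar_append _ (x ++ y) z, h,
        ← M.transPStar_append]
  · change M.rOf D _ = M.rOf (DPA.rdom (M.rOf D _)) _
    rw [M.rdom_rOf]

end DelayGames
end
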